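/- arXiv:2506.01429 — 3 statements merged into one kernel-verified Lean document; each statement's English description precedes it below -/
import Mathlib

section
/- Chen's identity: Let d ≥ 1 and let X : [0,1] → ℝ^d be a path whose coordinate functions X_1, …, X_d are continuously differentiable. Then for every s ∈ [0,1] and every word w = (i_1, …, i_k) with letters in {1, …, d}, the signature coefficient over [0,1] factors through s: σ_{0,1}(X)_w = Σ σ_{0,s}(X)_u · σ_{s,1}(X)_v, where the sum ranges over all k+1 ways of splitting w as a concatenation w = u·v of a (possibly empty) prefix u and suffix v. -/
/-- The signature coefficient of the path `X` over `[a,b]` at a word `w`: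
for `w = i₁ ⋯ i_k`, it is the iterated integral
`∫_{a < t₁ < ⋯ < t_k < b} X_{i₁}'(t₁) ⋯ X_{i_k}'(t_k)`, and `1` for the empty word. -/
noncomputable def sig {d : ℕ} (X : ℝ → Fin d → ℝ) (a b : ℝ) : List (Fin d) → ℝ
  | [] => 1
  | i :: w => ∫ t in a..b, deriv (fun s => X s i) t * sig X t b w

theorem sig_continuous {d : ℕ} (X : ℝ → Fin d → ℝ)
    (hX : ∀ i, ContDiff ℝ 1 fun t => X t i) (b : ℝ) (w : List (Fin d)) :
    Continuous fun a => sig X a b w := by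
  induction w with
  | nil => simpa only [sig] using continuous_const
  | cons i w ih =>
    have hc : Continuous fun t => deriv (fun s => X s i) t * sig X t b w :=
      ((hX i).continuous_deriv le_rfl).mul ih
    have h : (fun a => sig X a b (i :: w)) =
        fun a => -∫ t in b..a, deriv (fun s => X s i) t * sig X t b w := by
      funext a
      rw [sig, intervalIntegral.integral_symm]
    rw [h]
    exact (intervalIntegral.continuous_primitive
      (fun p q => hc.intervalIntegrable p q) b).neg

theorem sig_chen {d : ℕ} (X : ℝ → Fin d → ℝ)
    (hX : ∀ i, ContDiff ℝ 1 fun t => X t i) (s b : ℝ) (w : List (Fin d)) :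
    ∀ a : ℝ, sig X a b w =
      ∑ j ∈ Finset.range (w.length + 1), sig X a s (w.take j) * sig X s b (w.drop j) := by
  induction w with
  | nil => intro a; simp [sig]
  | cons i w ih =>
    intro a
    have hd := (hX i).continuous_deriv le_rfl
    have hc : Continuous fun t => deriv (fun s => X s i) t * sig X t b w :=
      hd.mul (sig_continuous X hX b w)
    rw [List.length_cons, Finset.sum_range_succ']
    simp only [List.take_succ_cons, List.drop_succ_cons, List.take_zero, List.drop_zero]
    have e : sig X a b (i :: w) =
        (∫ t in a..s, deriv (fun s => X s i) t * sig X t b w) + sig X s b (i :: w) := by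
      rw [sig, sig, intervalIntegral.integral_add_adjacent_intervals
        (hc.intervalIntegrable _ _) (hc.intervalIntegrable _ _)]
    rw [e]
    congr 1
    · simp_rw [ih, Finset.mul_sum]
      rw [intervalIntegral.integral_finsetSum]
      · refine Finset.sum_congr rfl fun j _ => ?_
        rw [sig, ← intervalIntegral.integral_mul_const]
        simp only [mul_assoc]
      · intro j _
        exact (hd.mul ((sig_continuous X hX s _).mul continuous_const)).intervalIntegrable _ _
    · simp [sig]


/-- **Chen's identity.**  For a path `X : [0,1] → ℝ^d` with continuously differentiable
coordinate functions, every `s ∈ [0,1]` and every word `w`, the signature coefficient over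
`[0,1]` factors through `s`: it is the sum, over all `k+1` splittings of `w` into a prefix
`u` and a suffix `v`, of `σ_(0,s)(X)_u * σ_(s,1)(X)_v`. -/
theorem chen_identity (d : ℕ) (hd : 1 ≤ d) (X : ℝ → Fin d → ℝ)
    (hX : ∀ i, ContDiff ℝ 1 fun t => X t i)
    (s : ℝ) (hs : s ∈ Set.Icc (0 : ℝ) 1) (w : List (Fin d)) :
    sig X 0 1 w =
      ∑ j ∈ Finset.range (w.length + 1), sig X 0 s (w.take j) * sig X s 1 (w.drop j) := by
  exact sig_chen X hX s 1 w 0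
end

section
/- Equivalent characterizations of Lyndon words: a nonempty word w over a linearly ordered alphabet is strictly smaller in lexicographic order than every proper rotation of itself (i.e., than every word v·u with w = u·v and u, v both nonempty) if and only if w is strictly smaller in lexicographic order than every proper nonempty suffix of itself. -/
theorem lyn_lex_cases {α : Type*} [LinearOrder α] {v w : List α}
    (h : List.Lex (· < ·) v w) :
    (∃ t, t ≠ [] ∧ w = v ++ t) ∨ ∀ x y, List.Lex (· < ·) (v ++ x) (w ++ y) := by
  induction h with
  | nil => exact Or.inl ⟨_, List.cons_ne_nil _ _, rfl⟩
  | cons h ih =>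
    rcases ih with ⟨t, ht, rfl⟩ | ih
    · exact Or.inl ⟨t, ht, rfl⟩
    · exact Or.inr fun x y => List.Lex.cons (ih x y)
  | rel h => exact Or.inr fun x y => List.Lex.rel h

theorem lyn_lex_cancel {α : Type*} [LinearOrder α] (v : List α) {a b : List α}
    (h : List.Lex (· < ·) (v ++ a) (v ++ b)) : List.Lex (· < ·) a b := by
  induction v with
  | nil => exact h
  | cons c v ih =>
    cases h with
    | cons h => exact ih h
    | rel h => exact absurd h (lt_irrefl _)

theorem lyn_lex_asymm {α : Type*} [LinearOrder α] {a b : List α}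
    (h : List.Lex (· < ·) a b) (h' : List.Lex (· < ·) b a) : False :=
  lt_asymm (a := a) (b := b) h h'

/-- **Equivalent characterizations of Lyndon words**: a nonempty word `w` over a linearly
ordered alphabet is strictly smaller in lexicographic order than every proper rotation of
itself (i.e. than every word `v ++ u` where `w = u ++ v` with `u, v` nonempty) if and only
if `w` is strictly smaller in lexicographic order than every proper nonempty suffix of
itself. -/
theorem lyndon_characterizations {α : Type*} [LinearOrder α] (w : List α) (hw : w ≠ []) :
    (∀ u v : List α, w = u ++ v → u ≠ [] → v ≠ [] → List.Lex (· < ·) w (v ++ u)) ↔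
      (∀ u v : List α, w = u ++ v → u ≠ [] → v ≠ [] → List.Lex (· < ·) w v) := by
  constructor
  · intro H u v huv hu hv
    have h1 := H u v huv hu hv
    rcases lt_trichotomy w v with h | h | h
    · exact h
    · exfalso
      have := congrArg List.length huv
      have := List.length_pos_iff.2 hu
      simp_all
    · exfalso
      rcases lyn_lex_cases (show List.Lex (· < ·) v w from h) with ⟨t, ht, hwt⟩ | hs
      · have h2 := H v t hwt hv ht
        have h3 : List.Lex (· < ·) t u := lyn_lex_cancel v (hwt ▸ h1)
        have hl : t.length = u.length := by
          have h4 := congrArg List.length huv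
          have h5 := congrArg List.length hwt
          simp only [List.length_append] at h4 h5
          omega
        rcases lyn_lex_cases h3 with ⟨s, hs, rfl⟩ | h6
        · have := List.length_pos_iff.2 hs
          simp only [List.length_append] at hl
          omega
        · exact lyn_lex_asymm h2 (huv ▸ h6 v v)
      · have h7 := hs u []
        rw [List.append_nil] at h7
        exact lyn_lex_asymm h1 h7
  · intro H u v huv hu hv
    exact List.Lex.append_right _ _ (H u v huv hu hv)
end

section
/- Polynomial evaluation via shuffles: Let d ≥ 1 and let X : [0,1] → ℝ^d be a path whose coordinate functions are continuously differentiable, with X(0) = 0. Let φ_d : ℝ[x_1, …, x_d] → (ℝ⟨1, …, d⟩, ⧢) be the unique ℝ-algebra homomorphism from the polynomial ring to the shuffle algebra sending x_i to the single-letter word (i), so that a monomial x_{i_1} ⋯ x_{i_l} is sent to (i_1) ⧢ ⋯ ⧢ (i_l). Extend w ↦ σ(X)_w linearly to ℝ⟨1, …, d⟩. Then for every polynomial q ∈ ℝ[x_1, …, x_d], ⟨σ(X), φ_d(q)⟩ = q(X(1)). -/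
/-- The shuffle product of two words, as an element of the free vector space
`ℝ⟨1,…,d⟩` with basis the words over `{1,…,d}`.  It is determined recursively by
`e ⧢ w = w ⧢ e = w` and `(u·a) ⧢ (v·b) = (u ⧢ (v·b))·a + ((u·a) ⧢ v)·b`. -/
noncomputable def shufW {d : ℕ} : List (Fin d) → List (Fin d) → (List (Fin d) →₀ ℝ)
  | u, v =>
    match hu : u.reverse, hv : v.reverse with
    | [], _ => Finsupp.single v 1
    | _ :: _, [] => Finsupp.single u 1
    | a :: u', b :: v' =>
        Finsupp.mapDomain (· ++ [a]) (shufW u'.reverse (v'.reverse ++ [b]))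
          + Finsupp.mapDomain (· ++ [b]) (shufW (u'.reverse ++ [a]) v'.reverse)
termination_by u v => u.length + v.length
decreasing_by
  all_goals
    (have h1 : u.length = u'.length + 1 := by
        have := congrArg List.length hu; simpa using this
     have h2 : v.length = v'.length + 1 := by
        have := congrArg List.length hv; simpa using this
     simp [h1, h2] <;> omega)

/-- The bilinear extension of the shuffle product to the free vector space `ℝ⟨1,…,d⟩`. -/
noncomputable def shuffleF {d : ℕ} (f g : List (Fin d) →₀ ℝ) : List (Fin d) →₀ ℝ :=
  f.sum fun u a => g.sum fun v b => (a * b) • shufW u v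

/-- The linear extension of `w ↦ σ(X)_w` to a linear functional on `ℝ⟨1,…,d⟩`. -/
noncomputable def sigL {d : ℕ} (X : ℝ → Fin d → ℝ) (f : List (Fin d) →₀ ℝ) : ℝ :=
  f.sum fun w a => a * sig X 0 1 w

/-- Sum of all insertions of the letter `i` in a word. -/
noncomputable def insW {d : ℕ} (i : Fin d) : List (Fin d) → (List (Fin d) →₀ ℝ)
  | [] => Finsupp.single [i] 1
  | a :: u => Finsupp.single (i :: a :: u) 1 + Finsupp.mapDomain (List.cons a) (insW i u)

lemma insW_append {d : ℕ} (i a : Fin d) (u : List (Fin d)) :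
    insW i (u ++ [a]) = Finsupp.mapDomain (· ++ [a]) (insW i u)
      + Finsupp.single (u ++ [a] ++ [i]) 1 := by
  induction u with
  | nil => simp [insW, Finsupp.mapDomain_single]
  | cons b u ih =>
    simp only [List.cons_append, insW, ih, Finsupp.mapDomain_add, Finsupp.mapDomain_single,
      ← Finsupp.mapDomain_comp, add_assoc]
    rfl

lemma shufW_nil_left {d : ℕ} (v : List (Fin d)) : shufW [] v = Finsupp.single v 1 := by
  rw [shufW]; rfl

lemma shufW_nil_right {d : ℕ} (u : List (Fin d)) : shufW u [] = Finsupp.single u 1 := by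
  rw [shufW]
  split
  · rename_i h
    simp at h
    simp [h]
  · rfl
  · rename_i h
    simp at h

lemma shufW_concat {d : ℕ} (u v : List (Fin d)) (a b : Fin d) :
    shufW (u ++ [a]) (v ++ [b]) = Finsupp.mapDomain (· ++ [a]) (shufW u (v ++ [b]))
      + Finsupp.mapDomain (· ++ [b]) (shufW (u ++ [a]) v) := by
  rw [shufW]
  split
  · rename_i h
    simp at h
  · rename_i h
    simp at h
  · rename_i h1 h2
    simp at h1 h2
    obtain ⟨rfl, rfl⟩ := h1
    obtain ⟨rfl, rfl⟩ := h2
    simp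

lemma shufW_letter {d : ℕ} (i : Fin d) (u : List (Fin d)) : shufW u [i] = insW i u := by
  induction u using List.reverseRecOn with
  | nil => rw [shufW_nil_left]; rfl
  | append_singleton u a ih =>
    have h := shufW_concat u [] a i
    rw [List.nil_append] at h
    rw [h, insW_append, ih, shufW_nil_right, Finsupp.mapDomain_single]

/-- Linear extension of the signature over `[t,1]`. -/
noncomputable def sigT {d : ℕ} (X : ℝ → Fin d → ℝ) (t : ℝ) : (List (Fin d) →₀ ℝ) →ₗ[ℝ] ℝ :=
  Finsupp.linearCombination ℝ (fun w => sig X t 1 w)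

lemma sigT_single {d : ℕ} (X : ℝ → Fin d → ℝ) (t : ℝ) (w : List (Fin d)) (a : ℝ) :
    sigT X t (Finsupp.single w a) = a * sig X t 1 w := by
  simp [sigT]

lemma sigL_eq {d : ℕ} (X : ℝ → Fin d → ℝ) (f : List (Fin d) →₀ ℝ) : sigL X f = sigT X 0 f := by
  simp [sigL, sigT, Finsupp.linearCombination_apply]

lemma hasDerivAt_left_int (f : ℝ → ℝ) (hf : Continuous f) (t : ℝ) :
    HasDerivAt (fun t => ∫ s in t..1, f s) (-f t) t :=
  intervalIntegral.integral_hasDerivAt_left (hf.intervalIntegrable _ _)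
    (hf.stronglyMeasurableAtFilter _ _) hf.continuousAt

section
variable {d : ℕ} {X : ℝ → Fin d → ℝ}

lemma cont_deriv (hX : ∀ i, ContDiff ℝ 1 fun t => X t i) (i : Fin d) :
    Continuous (deriv fun s => X s i) := (hX i).continuous_deriv le_rfl

lemma cont_sig (hX : ∀ i, ContDiff ℝ 1 fun t => X t i) (w : List (Fin d)) :
    Continuous fun t => sig X t 1 w := by
  induction w with
  | nil => simp only [sig]; exact continuous_const
  | cons i w ih =>
    simp only [sig]
    exact continuous_iff_continuousAt.2 fun t =>
      (hasDerivAt_left_int _ ((cont_deriv hX i).mul ih) t).continuousAt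

lemma deriv_sig (hX : ∀ i, ContDiff ℝ 1 fun t => X t i) (i : Fin d) (w : List (Fin d)) (t : ℝ) :
    HasDerivAt (fun t => sig X t 1 (i :: w)) (-(deriv (fun s => X s i) t * sig X t 1 w)) t := by
  simp only [sig]
  exact hasDerivAt_left_int _ ((cont_deriv hX i).mul (cont_sig hX w)) t

lemma deriv_sigT_cons (hX : ∀ i, ContDiff ℝ 1 fun t => X t i) (i : Fin d)
    (f : List (Fin d) →₀ ℝ) (t : ℝ) :
    HasDerivAt (fun t => sigT X t (Finsupp.mapDomain (List.cons i) f))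
      (-(deriv (fun s => X s i) t * sigT X t f)) t := by
  induction f using Finsupp.induction_linear with
  | zero => simpa using hasDerivAt_const t (0 : ℝ)
  | add f g hf hg =>
    simp only [Finsupp.mapDomain_add, map_add]
    exact (hf.add hg).congr_deriv (by ring)
  | single w a =>
    simp only [Finsupp.mapDomain_single, sigT_single]
    exact ((deriv_sig hX i w t).const_mul a).congr_deriv (by ring)

lemma sigT_cons_one (i : Fin d) (f : List (Fin d) →₀ ℝ) :
    sigT X 1 (Finsupp.mapDomain (List.cons i) f) = 0 := by
  induction f using Finsupp.induction_linear with
  | zero => simp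
  | add f g hf hg => simp [Finsupp.mapDomain_add, hf, hg]
  | single w a => simp [Finsupp.mapDomain_single, sigT_single, sig]

lemma sigT_insW (hX : ∀ i, ContDiff ℝ 1 fun t => X t i) (i : Fin d) (u : List (Fin d)) (t : ℝ) :
    sigT X t (insW i u) = sig X t 1 u * (X 1 i - X t i) := by
  have hdX : ∀ t, HasDerivAt (fun s => X s i) (deriv (fun s => X s i) t) t := fun t =>
    ((hX i).differentiable one_ne_zero t).hasDerivAt
  induction u generalizing t with
  | nil =>
    simp only [insW, sigT_single, sig, mul_one, one_mul]
    exact intervalIntegral.integral_eq_sub_of_hasDerivAt (fun s _ => hdX s)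
      ((cont_deriv hX i).intervalIntegrable _ _)
  | cons a u ih =>
    have key : ∀ t, HasDerivAt (fun t => sigT X t (insW i (a :: u))
        - sig X t 1 (a :: u) * (X 1 i - X t i)) 0 t := by
      intro t
      simp only [insW, map_add, sigT_single, one_mul]
      have h := ((deriv_sig hX i (a :: u) t).add (deriv_sigT_cons hX a (insW i u) t)).sub
        ((deriv_sig hX a u t).mul ((hdX t).const_sub (X 1 i)))
      refine h.congr_deriv ?_
      rw [ih]
      ring
    have hc := is_const_of_deriv_eq_zero (fun t => (key t).differentiableAt)
      (fun t => (key t).deriv) t 1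
    have h1 : sigT X 1 (insW i (a :: u)) = 0 := by
      simp [insW, sigT_single, sigT_cons_one, sig]
    simp only [h1, sub_self, mul_zero] at hc
    linarith

lemma sigT_shuffle (hX : ∀ i, ContDiff ℝ 1 fun t => X t i) (i : Fin d)
    (f : List (Fin d) →₀ ℝ) :
    sigT X 0 (shuffleF f (Finsupp.single [i] 1)) = sigT X 0 f * (X 1 i - X 0 i) := by
  have h : shuffleF f (Finsupp.single [i] 1) = f.sum fun u a => a • insW i u := by
    simp [shuffleF, shufW_letter]
  rw [h, map_finsuppSum]
  simp only [map_smul, sigT_insW hX]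
  rw [sigT, Finsupp.linearCombination_apply, Finsupp.sum, Finsupp.sum, Finset.sum_mul]
  simp [mul_assoc]

end

/-- **Polynomial evaluation via shuffles**: let `X : [0,1] → ℝ^d` be a path with
continuously differentiable coordinates and `X 0 = 0`, and let `φ` be the unique
`ℝ`-algebra homomorphism from the polynomial ring `ℝ[x₁,…,x_d]` to the shuffle algebra
`(ℝ⟨1,…,d⟩, ⧢)` sending `xᵢ` to the single-letter word `(i)` (i.e. `φ` is linear, unital,
multiplicative from products to shuffles, and sends variables to letters).  Then for every
polynomial `q`, the signature functional evaluated on `φ q` equals `q (X 1)`. -/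
theorem polynomial_evaluation_via_shuffles (d : ℕ) (hd : 1 ≤ d) (X : ℝ → Fin d → ℝ)
    (hX : ∀ i, ContDiff ℝ 1 fun t => X t i) (hX0 : ∀ i, X 0 i = 0)
    (φ : MvPolynomial (Fin d) ℝ →ₗ[ℝ] (List (Fin d) →₀ ℝ))
    (hφone : φ 1 = Finsupp.single [] 1)
    (hφmul : ∀ p q : MvPolynomial (Fin d) ℝ, φ (p * q) = shuffleF (φ p) (φ q))
    (hφX : ∀ i : Fin d, φ (MvPolynomial.X i) = Finsupp.single [i] 1)
    (q : MvPolynomial (Fin d) ℝ) :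
    sigL X (φ q) = MvPolynomial.eval (fun i => X 1 i) q := by
  simp only [sigL_eq]
  induction q using MvPolynomial.induction_on with
  | C a =>
    have h : (MvPolynomial.C a : MvPolynomial (Fin d) ℝ) = a • 1 := by
      rw [MvPolynomial.smul_eq_C_mul, mul_one]
    rw [MvPolynomial.eval_C, h, map_smul, hφone, map_smul, sigT_single]
    simp [sig]
  | add p q hp hq => simp [hp, hq]
  | mul_X p i hp =>
    rw [hφmul, hφX, sigT_shuffle hX, hp, hX0]
    simp
end
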